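/- Under random partitioning, conditional on two distinct units i (attribute a) and j (attribute a') being in the same group, the probability that unit i's peer attribute multiset equals r and unit j's equals r' is zero unless a' ∈ r, a ∈ r', and r with one copy of a' removed equals r' with one copy of a removed; in the nondegenerate case with a ≠ a' it equals C(n_{[a]}−1, r(a)) C(n_{[a']}−1, r(a')−1) Π_{q≠a,a'} C(n_{[q]}, r(q)) / C(n−2, K−1). -/

import Mathlib

open Finset

/-- The set of assignments of `n = m*(K+1)` units into `m` (labeled) groups of
size `K + 1`; the uniform distribution on this set models random partitioning. -/
def groupAssignSet (m K : ℕ) : Finset (Fin (m * (K + 1)) → Fin m) :=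
  univ.filter (fun g => ∀ t : Fin m, (univ.filter (fun i => g i = t)).card = K + 1)

/-- Peer attribute counts: unit `j ≠ i` in the same group as `i` with attribute `q`. -/
def peerCount {m K Hn : ℕ} (A : Fin (m * (K + 1)) → Fin Hn)
    (g : Fin (m * (K + 1)) → Fin m) (i : Fin (m * (K + 1))) (q : Fin Hn) : ℕ :=
  (univ.filter (fun j => j ≠ i ∧ g j = g i ∧ A j = q)).card

/-- number of assignments for which `T` is one of the groups -/
def fibSet (m K : ℕ) (T : Finset (Fin (m * (K + 1)))) : Finset (Fin (m * (K + 1)) → Fin m) :=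
  (groupAssignSet m K).filter (fun g => ∃ t, ∀ k, g k = t ↔ k ∈ T)

lemma fibSet_card_le (m K : ℕ) (T T' : Finset (Fin (m * (K + 1)))) (h : T.card = T'.card) :
    (fibSet m K T).card ≤ (fibSet m K T').card := by
  classical
  let e : {x // x ∈ T'} ≃ {x // x ∈ T} := Finset.equivOfCardEq h.symm
  let σ : Equiv.Perm (Fin (m * (K + 1))) := e.extendSubtype
  have hσ : ∀ k, σ k ∈ T ↔ k ∈ T' := by
    intro k
    constructor
    · intro hk
      by_contra hc
      exact e.extendSubtype_not_mem k hc hk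
    · intro hk
      exact e.extendSubtype_mem k hk
  refine Finset.card_le_card_of_injOn (fun g => g ∘ σ) ?_ ?_
  · intro g hg
    simp only [fibSet, groupAssignSet, coe_filter, mem_filter, mem_univ, true_and,
      Set.mem_ofPred_eq, Function.comp] at hg ⊢
    obtain ⟨h1, t, ht⟩ := hg
    refine ⟨fun t => ?_, t, fun k => ?_⟩
    · refine Eq.trans ?_ (h1 t)
      refine Finset.card_bij (fun a _ => σ a) ?_ ?_ ?_
      · intro a ha
        simpa using ha
      · intro a _ b _ hab
        exact σ.injective hab
      · intro b hb
        refine ⟨σ.symm b, ?_, ?_⟩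
        · simpa using hb
        · simp
    · rw [ht, hσ]
  · intro g _ g' _ hgg
    exact σ.surjective.injective_comp_right hgg

lemma fibSet_card_eq (m K : ℕ) (T T' : Finset (Fin (m * (K + 1)))) (h : T.card = T'.card) :
    (fibSet m K T).card = (fibSet m K T').card :=
  le_antisymm (fibSet_card_le m K T T' h) (fibSet_card_le m K T' T h.symm)

/-- common groupmates of `i` and `j` -/
def comPeers {m K : ℕ} (i j : Fin (m * (K + 1))) (g : Fin (m * (K + 1)) → Fin m) :
    Finset (Fin (m * (K + 1))) :=
  univ.filter (fun k => k ≠ i ∧ k ≠ j ∧ g k = g i)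

lemma insert_card {n : ℕ} {i j : Fin n} (hij : i ≠ j) {S : Finset (Fin n)}
    (hi : i ∉ S) (hj : j ∉ S) : (insert i (insert j S)).card = S.card + 2 := by
  rw [card_insert_of_notMem (by simp [hij, hi]), card_insert_of_notMem hj]

lemma comPeers_mem {m K : ℕ} (hK : 1 ≤ K) {i j : Fin (m * (K + 1))} (hij : i ≠ j)
    {g : Fin (m * (K + 1)) → Fin m} (hg : g ∈ (groupAssignSet m K).filter (fun g => g i = g j)) :
    comPeers i j g ∈ powersetCard (K - 1) ((univ.erase i).erase j) := by
  simp only [groupAssignSet, mem_filter, mem_univ, true_and] at hg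
  rw [mem_powersetCard]
  constructor
  · intro k hk
    simp only [comPeers, mem_filter, mem_univ, true_and] at hk
    simp [hk.1, hk.2.1]
  · have h1 := hg.1 (g i)
    have h2 : univ.filter (fun k => g k = g i) = insert i (insert j (comPeers i j g)) := by
      ext k
      simp only [comPeers, mem_filter, mem_univ, true_and, mem_insert]
      have := hg.2
      grind
    rw [h2, insert_card hij (by simp [comPeers]) (by simp [comPeers])] at h1
    omega

lemma fiber_eq {m K : ℕ} {i j : Fin (m * (K + 1))} 
    {S : Finset (Fin (m * (K + 1)))} (hi : i ∉ S) (hj : j ∉ S) :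
    ((groupAssignSet m K).filter (fun g => g i = g j)).filter (fun g => comPeers i j g = S)
      = fibSet m K (insert i (insert j S)) := by
  ext g
  simp only [fibSet, mem_filter, and_assoc, mem_insert]
  refine and_congr_right fun _ => ?_
  constructor
  · rintro ⟨h1, h2⟩
    refine ⟨g i, fun k => ?_⟩
    rw [← h2]
    simp only [comPeers, mem_filter, mem_univ, true_and]
    grind
  · rintro ⟨t, ht⟩
    have h1 : g i = t := by rw [ht]; simp
    have h2 : g j = t := by rw [ht]; simp
    refine ⟨h1.trans h2.symm, ?_⟩
    ext k
    simp only [comPeers, mem_filter, mem_univ, true_and]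
    rw [h1, ht]
    grind

lemma card_through {m K : ℕ} (hK : 1 ≤ K) {i j : Fin (m * (K + 1))} (hij : i ≠ j) :
    ∃ c : ℕ, ∀ P : Finset (Fin (m * (K + 1))) → Prop, ∀ [DecidablePred P],
      (((groupAssignSet m K).filter (fun g => g i = g j)).filter
        (fun g => P (comPeers i j g))).card =
      ((powersetCard (K - 1) ((univ.erase i).erase j)).filter P).card * c := by
  classical
  by_cases hne : (powersetCard (K - 1) ((univ.erase i).erase j)).Nonempty
  · obtain ⟨S0, hS0⟩ := hne
    refine ⟨(fibSet m K (insert i (insert j S0))).card, fun P _ => ?_⟩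
    rw [Finset.card_eq_sum_card_fiberwise (f := comPeers i j)
      (t := (powersetCard (K - 1) ((univ.erase i).erase j)).filter P)]
    · rw [Finset.sum_const_nat]
      intro S hS
      rw [mem_filter] at hS
      obtain ⟨hS, hP⟩ := hS
      have hm : ∀ S ∈ powersetCard (K - 1) ((univ.erase i).erase j),
          i ∉ S ∧ j ∉ S ∧ S.card = K - 1 := by
        intro S hS
        rw [mem_powersetCard] at hS
        refine ⟨fun h => ?_, fun h => ?_, hS.2⟩
        · have := hS.1 h
          simp at this
        · have := hS.1 h
          simp at this
      obtain ⟨a1, a2, a3⟩ := hm S hS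
      obtain ⟨b1, b2, b3⟩ := hm S0 hS0
      have : (((groupAssignSet m K).filter (fun g => g i = g j)).filter
        (fun g => P (comPeers i j g))).filter (fun g => comPeers i j g = S) =
        fibSet m K (insert i (insert j S)) := by
        rw [← fiber_eq a1 a2]
        ext g
        simp only [mem_filter]
        grind
      rw [this]
      apply fibSet_card_eq
      rw [insert_card hij a1 a2, insert_card hij b1 b2, a3, b3]
    · intro g hg
      simp only [coe_filter, Set.mem_ofPred_eq] at hg ⊢
      exact ⟨comPeers_mem hK hij (by simpa using hg.1), hg.2⟩
  · refine ⟨0, fun P _ => ?_⟩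
    rw [mul_zero, card_eq_zero, Finset.eq_empty_iff_forall_notMem]
    intro g hg
    exact hne ⟨_, comPeers_mem hK hij (mem_filter.1 hg).1⟩

lemma count_sets {n H : ℕ} (A : Fin n → Fin H) (U : Finset (Fin n)) (s : Fin H → ℕ) :
    ((powersetCard (∑ q, s q) U).filter
      (fun S => ∀ q, (S.filter (fun k => A k = q)).card = s q)).card =
    ∏ q, ((U.filter (fun k => A k = q)).card).choose (s q) := by
  classical
  have : ∏ q, ((U.filter (fun k => A k = q)).card).choose (s q) =
      (Fintype.piFinset (fun q => powersetCard (s q) (U.filter (fun k => A k = q)))).card := by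
    rw [Fintype.card_piFinset]
    simp
  rw [this]
  have key : ∀ f ∈ Fintype.piFinset (fun q => powersetCard (s q) (U.filter (fun k => A k = q))),
      ∀ q, (univ.biUnion f).filter (fun k => A k = q) = f q := by
    intro f hf q
    simp only [Fintype.mem_piFinset, mem_powersetCard] at hf
    ext k
    simp only [mem_filter, mem_biUnion, mem_univ, true_and]
    constructor
    · rintro ⟨⟨q', hq'⟩, h⟩
      have := (mem_filter.1 ((hf q').1 hq')).2
      rw [← h, this]
      exact hq'
    · intro hk
      exact ⟨⟨q, hk⟩, (mem_filter.1 ((hf q).1 hk)).2⟩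
  refine Finset.card_nbij' (fun S q => S.filter (fun k => A k = q)) (fun f => univ.biUnion f)
    ?_ ?_ ?_ ?_
  · intro S hS
    simp only [coe_filter, mem_powersetCard, Set.mem_ofPred_eq] at hS
    simp only [mem_coe, Fintype.mem_piFinset, mem_powersetCard]
    exact fun q => ⟨filter_subset_filter _ hS.1.1, hS.2 q⟩
  · intro f hf
    have hk := key f hf
    simp only [mem_coe, Fintype.mem_piFinset, mem_powersetCard] at hf
    simp only [coe_filter, mem_powersetCard, Set.mem_ofPred_eq]
    have h2 : ∀ q, ((univ.biUnion f).filter (fun k => A k = q)).card = s q := by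
      intro q
      rw [hk q, (hf q).2]
    refine ⟨⟨?_, ?_⟩, h2⟩
    · intro k hk
      simp only [mem_biUnion, mem_univ, true_and] at hk
      obtain ⟨q, hq⟩ := hk
      exact (mem_filter.1 ((hf q).1 hq)).1
    · rw [Finset.card_eq_sum_card_fiberwise (f := A) (t := univ) (by intro x _; simp)]
      exact Finset.sum_congr rfl fun q _ => h2 q
  · intro S _
    ext k
    simp
  · intro f hf
    funext q
    exact key f hf q

lemma peerCount_left {m K Hn : ℕ} (A : Fin (m * (K + 1)) → Fin Hn) {i j : Fin (m * (K + 1))}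
    (hij : i ≠ j) {g : Fin (m * (K + 1)) → Fin m} (hg : g i = g j) (q : Fin Hn) :
    peerCount A g i q =
      ((comPeers i j g).filter (fun k => A k = q)).card + (if q = A j then 1 else 0) := by
  unfold peerCount
  split_ifs with h
  · have : univ.filter (fun k => k ≠ i ∧ g k = g i ∧ A k = q) =
        insert j ((comPeers i j g).filter (fun k => A k = q)) := by
      ext k
      simp only [comPeers, mem_filter, mem_univ, true_and, mem_insert]
      grind
    rw [this, card_insert_of_notMem (by simp [comPeers])]
  · rw [add_zero]
    congr 1
    ext k
    simp only [comPeers, mem_filter, mem_univ, true_and]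
    grind

lemma peerCount_right {m K Hn : ℕ} (A : Fin (m * (K + 1)) → Fin Hn) {i j : Fin (m * (K + 1))}
    (hij : i ≠ j) {g : Fin (m * (K + 1)) → Fin m} (hg : g i = g j) (q : Fin Hn) :
    peerCount A g j q =
      ((comPeers i j g).filter (fun k => A k = q)).card + (if q = A i then 1 else 0) := by
  rw [peerCount_left A hij.symm hg.symm]
  congr 3
  ext k
  simp only [comPeers, mem_filter, mem_univ, true_and]
  grind

/-- Under random partitioning, conditional on distinct units `i` (attribute `a`)
and `j` (attribute `a'`) being in the same group, the probability that `i`'s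
peer attribute multiset is `r` (multiplicities `rc`) and `j`'s is `r'`
(multiplicities `rc'`) is zero unless `a' ∈ r`, `a ∈ r'`, and `r` with one copy
of `a'` removed equals `r'` with one copy of `a` removed; when these hold and
`a ≠ a'`, it equals
`C(n_{[a]}−1, rc a) C(n_{[a']}−1, rc a' − 1) Π_{q≠a,a'} C(n_{[q]}, rc q) / C(n−2, K−1)`. -/
theorem random_partition_joint_given_same_group
    (m K Hn : ℕ) (hK : 1 ≤ K) (A : Fin (m * (K + 1)) → Fin Hn)
    (i j : Fin (m * (K + 1))) (hij : i ≠ j)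
    (hd : ((groupAssignSet m K).filter (fun g => g i = g j)).Nonempty)
    (rc rc' : Fin Hn → ℕ) (hrc : ∑ q : Fin Hn, rc q = K) (hrc' : ∑ q : Fin Hn, rc' q = K) :
    (¬ (1 ≤ rc (A j) ∧ 1 ≤ rc' (A i) ∧ ∀ q : Fin Hn,
          rc q - (if q = A j then 1 else 0) = rc' q - (if q = A i then 1 else 0)) →
      ((((groupAssignSet m K).filter (fun g => g i = g j ∧
            (∀ q, peerCount A g i q = rc q) ∧ (∀ q, peerCount A g j q = rc' q))).card : ℝ) /
          ((((groupAssignSet m K).filter (fun g => g i = g j)).card : ℕ) : ℝ)) = 0) ∧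
    ((1 ≤ rc (A j) ∧ 1 ≤ rc' (A i) ∧ ∀ q : Fin Hn,
          rc q - (if q = A j then 1 else 0) = rc' q - (if q = A i then 1 else 0)) →
      A i ≠ A j →
      ((((groupAssignSet m K).filter (fun g => g i = g j ∧
            (∀ q, peerCount A g i q = rc q) ∧ (∀ q, peerCount A g j q = rc' q))).card : ℝ) /
          ((((groupAssignSet m K).filter (fun g => g i = g j)).card : ℕ) : ℝ)) =
        ((((univ.filter (fun k => A k = A i)).card - 1).choose (rc (A i)) *
            (((univ.filter (fun k => A k = A j)).card - 1).choose (rc (A j) - 1)) *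
            ∏ q ∈ (univ.erase (A i)).erase (A j),
              ((univ.filter (fun k => A k = q)).card).choose (rc q) : ℕ) : ℝ) /
          (((m * (K + 1) - 2).choose (K - 1) : ℕ) : ℝ)) := by
  classical
  constructor
  · intro hn
    rw [div_eq_zero_iff]
    left
    rw [Nat.cast_eq_zero, card_eq_zero, Finset.eq_empty_iff_forall_notMem]
    intro g hg
    apply hn
    obtain ⟨_, h1, h2, h3⟩ := mem_filter.1 hg
    simp only [peerCount_left A hij h1] at h2
    simp only [peerCount_right A hij h1] at h3
    refine ⟨?_, ?_, fun q => ?_⟩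
    · rw [← h2, if_pos rfl]; omega
    · rw [← h3, if_pos rfl]; omega
    · rw [← h2, ← h3]; omega
  · rintro ⟨h1, h2, h3⟩ hA
    set s : Fin Hn → ℕ := fun q => rc q - (if q = A j then 1 else 0) with hs
    have hrcs : ∀ q, rc q = s q + (if q = A j then 1 else 0) := by
      intro q
      simp only [hs]
      split_ifs with h
      · subst h; omega
      · rfl
    have hrcs' : ∀ q, rc' q = s q + (if q = A i then 1 else 0) := by
      intro q
      simp only [hs]
      rw [h3 q]
      split_ifs with h
      · subst h; omega
      · rfl
    have hsum : ∑ q, s q = K - 1 := by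
      have : ∑ q, rc q = ∑ q, s q + 1 := by
        simp only [hrcs, sum_add_distrib]
        simp
      omega
    obtain ⟨c, hc⟩ := card_through hK hij
    have hnum : (groupAssignSet m K).filter (fun g => g i = g j ∧
            (∀ q, peerCount A g i q = rc q) ∧ (∀ q, peerCount A g j q = rc' q)) =
        ((groupAssignSet m K).filter (fun g => g i = g j)).filter
          (fun g => ∀ q, ((comPeers i j g).filter (fun k => A k = q)).card = s q) := by
      ext g
      simp only [mem_filter, and_assoc]
      refine and_congr_right fun _ => and_congr_right fun hg => ?_
      simp only [peerCount_left A hij hg, peerCount_right A hij hg, hrcs, hrcs',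
        add_left_inj, and_self]
    have hden := hc (fun _ => True)
    have hN := hc (fun S => ∀ q, (S.filter (fun k => A k = q)).card = s q)
    rw [← hsum, count_sets] at hN
    simp only [filter_true, card_powersetCard] at hden
    have hU : ((univ.erase i).erase j : Finset (Fin (m * (K + 1)))).card = m * (K + 1) - 2 := by
      rw [card_erase_of_mem (by simp [hij.symm]), card_erase_of_mem (by simp)]
      simp
      omega
    rw [hU] at hden
    have hpos := card_pos.2 hd
    rw [hden] at hpos
    have hc0 : (c : ℝ) ≠ 0 := by
      have := Nat.pos_of_mul_pos_left hpos
      positivity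
    rw [hnum, hN, hden, Nat.cast_mul, Nat.cast_mul, mul_div_mul_right _ _ hc0]
    congr 2
    rw [← Finset.mul_prod_erase univ _ (mem_univ (A i)),
      ← Finset.mul_prod_erase (univ.erase (A i)) _ (mem_erase.2 ⟨hA.symm, mem_univ (A j)⟩),
      ← mul_assoc]
    have e1 : ((univ.erase i).erase j).filter (fun k => A k = A i) =
        (univ.filter (fun k => A k = A i)).erase i := by
      ext k
      simp only [mem_filter, mem_erase, mem_univ, and_true]
      grind
    have e2 : ((univ.erase i).erase j).filter (fun k => A k = A j) =
        (univ.filter (fun k => A k = A j)).erase j := by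
      ext k
      simp only [mem_filter, mem_erase, mem_univ, and_true]
      grind
    rw [e1, e2, card_erase_of_mem (by simp), card_erase_of_mem (by simp)]
    congr 1
    · simp [hs, hA]
    · refine prod_congr rfl fun q hq => ?_
      simp only [mem_erase, mem_univ, and_true] at hq
      have e3 : ((univ.erase i).erase j).filter (fun k => A k = q) =
          univ.filter (fun k => A k = q) := by
        ext k
        simp only [mem_filter, mem_erase, mem_univ, and_true]
        grind
      rw [e3]
      simp [hs, hq.1]
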